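/- arXiv:2112.06526 — 2 statements merged into one kernel-verified Lean document; each statement's English description precedes it below -/
import Mathlib

section
/- Let G be any finite simple graph, let e_G be its number of edges and T_G its number of triangles. Then 6·T_G ≤ (2·e_G)^{3/2}. -/
open scoped BigOperators Classical
open Finset Filter

noncomputable section

/-- Number of edges of a finite simple graph. -/
def edgeCount {V : Type*} [Fintype V] (G : SimpleGraph V) : ℕ :=
  (Finset.univ.filter (fun e : Sym2 V => e ∈ G.edgeSet)).card

/-- Number of triangles (3-cliques) of a finite simple graph. -/
def triangleCount {V : Type*} [Fintype V] (G : SimpleGraph V) : ℕ :=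
  (Finset.univ.filter (fun s : Finset V => G.IsNClique 3 s)).card

/-- Number of vertices lying in at least one triangle. -/
def vT {V : Type*} [Fintype V] (G : SimpleGraph V) : ℕ :=
  (Finset.univ.filter (fun v : V => ∃ u w : V, G.Adj v u ∧ G.Adj v w ∧ G.Adj u w)).card

/-- Degree of a vertex. -/
def deg {V : Type*} [Fintype V] (G : SimpleGraph V) (v : V) : ℕ :=
  (Finset.univ.filter (fun u => G.Adj v u)).card

/-- Probability that the Erdős–Rényi random graph `G_{n,p}` equals the graph `G`. -/
def graphProb (n : ℕ) (p : ℝ) (G : SimpleGraph (Fin n)) : ℝ :=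
  p ^ edgeCount G * (1 - p) ^ (n.choose 2 - edgeCount G)

/-- Probability of an event under the Erdős–Rényi measure. -/
def prob (n : ℕ) (p : ℝ) (A : Set (SimpleGraph (Fin n))) : ℝ :=
  ∑ G : SimpleGraph (Fin n), if G ∈ A then graphProb n p G else 0

/-- Conditional probability `P(A | B)` (with the convention `0` when `P(B) = 0`). -/
def condProb (n : ℕ) (p : ℝ) (A B : Set (SimpleGraph (Fin n))) : ℝ :=
  prob n p (A ∩ B) / prob n p B

/-- Conditional expectation `E_G[f]` given that every edge of `G` is present. -/
def condExpect (n : ℕ) (p : ℝ) (G : SimpleGraph (Fin n)) (f : SimpleGraph (Fin n) → ℝ) : ℝ :=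
  (∑ H : SimpleGraph (Fin n), if G ≤ H then graphProb n p H * f H else 0) /
    prob n p {H | G ≤ H}

/-- `E_G(T)`: conditional expectation of the number of triangles. -/
def condTri (n : ℕ) (p : ℝ) (G : SimpleGraph (Fin n)) : ℝ :=
  condExpect n p G (fun H => (triangleCount H : ℝ))

/-- The variational quantity `Φ_{n,p,k}(a)`. -/
def Phi (n : ℕ) (p k a : ℝ) : ℝ :=
  sInf {x : ℝ | ∃ G : SimpleGraph (Fin n),
    a * k ≤ condTri n p G ∧ x = (edgeCount G : ℝ) * Real.log (1 / p)}

/-- A seed, with parameters `a, w, C, k` and edge probability `p`. -/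
def IsSeed (n : ℕ) (p a w C k : ℝ) (G : SimpleGraph (Fin n)) : Prop :=
  (a - w) * k ≤ condTri n p G ∧
  (edgeCount G : ℝ) ≤ C * a * w⁻¹ * k ^ ((2 : ℝ) / 3) * Real.log (1 / p)

/-- A core, with parameters `a, w, C, k` and edge probability `p`. -/
def IsCore (n : ℕ) (p a w C k : ℝ) (G : SimpleGraph (Fin n)) : Prop :=
  (a - 2 * w) * k ≤ condTri n p G ∧
  (edgeCount G : ℝ) ≤ C * a * w⁻¹ * k ^ ((2 : ℝ) / 3) * Real.log (1 / p) ∧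
  ∀ e ∈ G.edgeSet,
    w ^ 2 * k ^ ((1 : ℝ) / 3) / (C * a * Real.log (1 / p)) ≤
      condTri n p G - condTri n p (G.deleteEdges {e})

/-- A `q`-basic graph. -/
def qBasic {V : Type*} [Fintype V] (q : ℕ) (G : SimpleGraph V) : Prop :=
  vT G = q ∧ ∀ e ∈ G.edgeSet, vT (G.deleteEdges {e}) < q

/-- Containment of a `(δ, m)`-near-clique. -/
def containsNearClique {n : ℕ} (H : SimpleGraph (Fin n)) (δ m : ℝ) : Prop :=
  ∃ H' : SimpleGraph (Fin n), H' ≤ H ∧ 0 < edgeCount H' ∧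
    ∀ v : Fin n, (∃ u, H'.Adj v u) →
      (1 - 4 * δ ^ ((1 : ℝ) / 2)) * (2 * m) ^ ((1 : ℝ) / 2) ≤ (deg H' v : ℝ)

/-- Partition function of the exponential random graph model tilted by `exp(b · V_T)`. -/
def ergmZ (n : ℕ) (p b : ℝ) : ℝ :=
  ∑ G : SimpleGraph (Fin n), graphProb n p G * Real.exp (b * vT G)

/-- Probability of an event under the exponential random graph measure. -/
def ergmProb (n : ℕ) (p b : ℝ) (A : Set (SimpleGraph (Fin n))) : ℝ :=
  (∑ G : SimpleGraph (Fin n),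
    if G ∈ A then graphProb n p G * Real.exp (b * vT G) else 0) / ergmZ n p b

/-!
Let `c(u, v)` be the number of common neighbours of `u` and `v`. For adjacent `u, v` this is the
number of triangles through `u` and `v`, and every triangle contains six ordered adjacent pairs, so
`6 T` is the sum of `c(u, v)` over the `2 e` ordered adjacent pairs. By Cauchy–Schwarz,
`(6 T)² ≤ 2 e · ∑ c(u, v)²`. Since `c(u, v)` is at most each of the two degrees,
`c(u, v)² ≤ d(u) d(v)`, and the sum of `d(u) d(v)` over all pairs of vertices is
`(∑ d(v))² = (2 e)²`. Hence `(6 T)² ≤ (2 e)³`.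
-/

section

variable {V : Type*} [Fintype V] (G : SimpleGraph V) [DecidableRel G.Adj]

theorem sum_sq_card_commonNeighbors_le :
    ∑ p : V × V, Fintype.card (G.commonNeighbors p.1 p.2) ^ 2 ≤ (2 * #G.edgeFinset) ^ 2 :=
  calc
    _ ≤ ∑ p : V × V, G.degree p.1 * G.degree p.2 := sum_le_sum fun p _ ↦ by
      rw [sq]
      exact Nat.mul_le_mul (G.card_commonNeighbors_le_degree_left _ _)
        (G.card_commonNeighbors_le_degree_right _ _)
    _ = (∑ v, G.degree v) ^ 2 := by rw [Fintype.sum_prod_type, sq, sum_mul_sum]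
    _ = (2 * #G.edgeFinset) ^ 2 := by rw [G.sum_degrees_eq_twice_card_edges]

variable [DecidableEq V]

theorem sum_adj_card_cliqueFinset_filter_mem (n : ℕ) :
    ∑ p : V × V with G.Adj p.1 p.2, #{s ∈ G.cliqueFinset n | p.1 ∈ s ∧ p.2 ∈ s} =
      #(G.cliqueFinset n) * (n * (n - 1)) := by
  have card_adj_pairs : ∀ s ∈ G.cliqueFinset n,
      #{p ∈ {p : V × V | G.Adj p.1 p.2} | p.1 ∈ s ∧ p.2 ∈ s} = n * (n - 1) := by
    intro s hs
    obtain ⟨hclique, hcard⟩ := G.mem_cliqueFinset_iff.1 hs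
    have adj_pairs_eq_offDiag :
        ({p ∈ {p : V × V | G.Adj p.1 p.2} | p.1 ∈ s ∧ p.2 ∈ s} : Finset (V × V)) = s.offDiag := by
      ext ⟨u, v⟩
      simp only [mem_filter, mem_univ, true_and, mem_offDiag]
      exact ⟨fun ⟨huv, hu, hv⟩ ↦ ⟨hu, hv, huv.ne⟩,
        fun ⟨hu, hv, hne⟩ ↦ ⟨hclique hu hv hne, hu, hv⟩⟩
    rw [adj_pairs_eq_offDiag, offDiag_card, hcard, Nat.mul_sub_one]
  calc
    _ = ∑ s ∈ G.cliqueFinset n, #{p ∈ {p : V × V | G.Adj p.1 p.2} | p.1 ∈ s ∧ p.2 ∈ s} :=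
      sum_card_bipartiteAbove_eq_sum_card_bipartiteBelow fun (p : V × V) s ↦ p.1 ∈ s ∧ p.2 ∈ s
    _ = #(G.cliqueFinset n) * (n * (n - 1)) := sum_const_nat card_adj_pairs

variable {G} in
theorem card_cliqueFinset_three_filter_mem_of_adj {u v : V} (huv : G.Adj u v) :
    #{s ∈ G.cliqueFinset 3 | u ∈ s ∧ v ∈ s} = Fintype.card (G.commonNeighbors u v) := by
  have triangles_eq_image : ({s ∈ G.cliqueFinset 3 | u ∈ s ∧ v ∈ s} : Finset (Finset V)) =
      (G.commonNeighbors u v).toFinset.image fun w ↦ {u, v, w} := by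
    ext s
    simp only [mem_filter, SimpleGraph.mem_cliqueFinset_iff, mem_image, Set.mem_toFinset,
      SimpleGraph.mem_commonNeighbors]
    constructor
    · rintro ⟨hs, hu, hv⟩
      have pair_subset : {u, v} ⊆ s := by simp [insert_subset_iff, hu, hv]
      obtain ⟨w, hw⟩ : ∃ w, s \ {u, v} = {w} := card_eq_one.1 <| by
        rw [card_sdiff_of_subset pair_subset, hs.card_eq, card_pair huv.ne]
      obtain rfl : {u, v, w} = s := by
        rw [← union_sdiff_of_subset pair_subset, hw, insert_union, singleton_union]
      exact ⟨w, (SimpleGraph.is3Clique_triple_iff.1 hs).2, rfl⟩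
    · rintro ⟨w, ⟨huw, hvw⟩, rfl⟩
      exact ⟨SimpleGraph.is3Clique_triple_iff.2 ⟨huv, huw, hvw⟩, by simp, by simp⟩
  have injOn_third : Set.InjOn (fun w ↦ ({u, v, w} : Finset V)) (G.commonNeighbors u v) := by
    intro w hw w' _ h
    have hmem : w ∈ ({u, v, w'} : Finset V) := by simp [← h]
    simpa [hw.1.ne', hw.2.ne'] using hmem
  rw [triangles_eq_image, card_image_of_injOn (by simpa using injOn_third), Set.toFinset_card]

theorem sum_adj_card_commonNeighbors :
    ∑ p : V × V with G.Adj p.1 p.2, Fintype.card (G.commonNeighbors p.1 p.2) =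
      6 * #(G.cliqueFinset 3) := by
  rw [mul_comm, ← sum_adj_card_cliqueFinset_filter_mem G 3]
  exact sum_congr rfl fun p hp ↦
    (card_cliqueFinset_three_filter_mem_of_adj (mem_filter.1 hp).2).symm

theorem sq_six_mul_card_cliqueFinset_three_le :
    (6 * #(G.cliqueFinset 3)) ^ 2 ≤ (2 * #G.edgeFinset) ^ 3 :=
  calc
    _ = (∑ p : V × V with G.Adj p.1 p.2, Fintype.card (G.commonNeighbors p.1 p.2)) ^ 2 := by
      rw [sum_adj_card_commonNeighbors]
    _ ≤ #{p : V × V | G.Adj p.1 p.2} *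
          ∑ p : V × V with G.Adj p.1 p.2, Fintype.card (G.commonNeighbors p.1 p.2) ^ 2 :=
      sq_sum_le_card_mul_sum_sq
    _ ≤ 2 * #G.edgeFinset * (2 * #G.edgeFinset) ^ 2 :=
      Nat.mul_le_mul G.two_mul_card_edgeFinset.ge
        ((sum_le_univ_sum_of_nonneg fun _ ↦ Nat.zero_le _).trans
          (sum_sq_card_commonNeighbors_le G))
    _ = (2 * #G.edgeFinset) ^ 3 := by ring

end

section

variable {V : Type*} [Fintype V] (G : SimpleGraph V)

theorem edgeCount_eq_card_edgeFinset : edgeCount G = #G.edgeFinset :=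
  congrArg card (by ext; simp)

theorem triangleCount_eq_card_cliqueFinset : triangleCount G = #(G.cliqueFinset 3) :=
  congrArg card (by ext; simp)

end

theorem le_rpow_div_of_pow_le_pow {x y : ℝ} {m n : ℕ} (hy : 0 ≤ y) (hm : m ≠ 0)
    (h : x ^ m ≤ y ^ n) : x ≤ y ^ ((n : ℝ) / m) := by
  have rpow_div_pow : (y ^ ((n : ℝ) / m)) ^ m = y ^ n := by
    rw [← Real.rpow_mul_natCast hy, div_mul_cancel₀ _ (Nat.cast_ne_zero.2 hm), Real.rpow_natCast]
  exact le_of_pow_le_pow_left₀ hm (Real.rpow_nonneg hy _) (h.trans_eq rpow_div_pow.symm)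

/-- **Lower bound on the edge count for graphs with many triangles:**
`6 T_G ≤ (2 e_G)^{3/2}` for every finite simple graph `G`. -/
theorem six_triangles_le (V : Type*) [Fintype V] (G : SimpleGraph V) :
    (6 * triangleCount G : ℝ) ≤ (2 * edgeCount G : ℝ) ^ ((3 : ℝ) / 2) := by
  rw [triangleCount_eq_card_cliqueFinset, edgeCount_eq_card_edgeFinset]
  have sq_le_cube : (6 * #(G.cliqueFinset 3) : ℝ) ^ 2 ≤ (2 * #G.edgeFinset : ℝ) ^ 3 := by
    exact_mod_cast sq_six_mul_card_cliqueFinset_three_le G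
  exact_mod_cast le_rpow_div_of_pow_le_pow (by positivity) two_ne_zero sq_le_cube
end
end

section
/- Fix λ > 0 and set p_n = λ/n with n > λ. Fix a > 0, w > 0, C > 0 and k > 0. Then every seed G ⊆ K_n contains a subgraph G* ⊆ G that is a core (with the same parameters a, w, C, k). -/
open scoped BigOperators Classical
open Finset Filter

noncomputable section

section EdgeCount

variable {V : Type*} [Fintype V]

lemma edgeCount_eq_ncard (G : SimpleGraph V) : edgeCount G = G.edgeSet.ncard := by
  rw [Set.ncard_eq_toFinset_card', edgeCount]
  congr 1
  ext e
  simp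

lemma edgeCount_mono {G H : SimpleGraph V} (h : G ≤ H) : edgeCount G ≤ edgeCount H := by
  simpa only [edgeCount_eq_ncard] using Set.ncard_le_ncard (SimpleGraph.edgeSet_mono h)

lemma edgeCount_deleteEdges_singleton_add_one {G : SimpleGraph V} {e : Sym2 V}
    (he : e ∈ G.edgeSet) : edgeCount (G.deleteEdges {e}) + 1 = edgeCount G := by
  simpa only [edgeCount_eq_ncard, SimpleGraph.edgeSet_deleteEdges] using
    Set.ncard_sdiff_singleton_add_one he

/-- Any subgraph `G'` of `G` maximizing `f G' - edgeCount G' • d` works: deleting one more edge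
cannot increase this penalized value. -/
theorem exists_le_forall_le_sub_deleteEdges {M : Type*} [AddCommGroup M] [LinearOrder M]
    [IsOrderedAddMonoid M] (f : SimpleGraph V → M) (d : M) (G : SimpleGraph V) :
    ∃ G' ≤ G, f G - edgeCount G • d ≤ f G' - edgeCount G' • d ∧
      ∀ e ∈ G'.edgeSet, d ≤ f G' - f (G'.deleteEdges {e}) := by
  obtain ⟨G', hG'G, hmax⟩ := (Set.toFinite (Set.Iic G)).exists_maximalFor
    (fun H ↦ f H - edgeCount H • d) _ ⟨G, Set.self_mem_Iic⟩
  have le_of_le {H : SimpleGraph V} (hH : H ≤ G) :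
      f H - edgeCount H • d ≤ f G' - edgeCount G' • d :=
    (le_total _ _).elim id (hmax hH)
  refine ⟨G', hG'G, le_of_le le_rfl, fun e he ↦ ?_⟩
  have hdel := le_of_le ((G'.deleteEdges_le {e}).trans hG'G)
  rw [← edgeCount_deleteEdges_singleton_add_one he, succ_nsmul', ← sub_sub,
    sub_le_sub_iff_right] at hdel
  exact le_sub_comm.mp hdel

end EdgeCount

lemma core_margin_mul_seed_edge_bound {a w C k L : ℝ} (ha : a ≠ 0) (hC : C ≠ 0) (hk : 0 ≤ k)
    (hL : L ≠ 0) :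
    w ^ 2 * k ^ ((1 : ℝ) / 3) / (C * a * L) * (C * a * w⁻¹ * k ^ ((2 : ℝ) / 3) * L) = w * k := by
  have k_split : k ^ ((1 : ℝ) / 3) * k ^ ((2 : ℝ) / 3) = k := by
    rw [← Real.rpow_add_of_nonneg hk (by norm_num) (by norm_num)]
    norm_num
  calc w ^ 2 * k ^ ((1 : ℝ) / 3) / (C * a * L) * (C * a * w⁻¹ * k ^ ((2 : ℝ) / 3) * L)
      = w * (k ^ ((1 : ℝ) / 3) * k ^ ((2 : ℝ) / 3)) := by field_simp
    _ = w * k := by rw [k_split]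

/-- **Seeds contain cores.** -/
theorem seed_contains_core (l a w C k : ℝ) (n : ℕ) (hl : 0 < l) (hn : l < n)
    (ha : 0 < a) (hw : 0 < w) (hC : 0 < C) (hk : 0 < k)
    (G : SimpleGraph (Fin n)) (hG : IsSeed n (l / n) a w C k G) :
    ∃ G' : SimpleGraph (Fin n), G' ≤ G ∧ IsCore n (l / n) a w C k G' := by
  obtain ⟨hT, hE⟩ := hG
  have hL : 0 < Real.log (1 / (l / n)) :=
    Real.log_pos (by rwa [one_div_div, one_lt_div hl])
  have hdB := core_margin_mul_seed_edge_bound (w := w) ha.ne' hC.ne' hk.le hL.ne'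
  set d := w ^ 2 * k ^ ((1 : ℝ) / 3) / (C * a * Real.log (1 / (l / n)))
  have hd : 0 ≤ d := by positivity
  obtain ⟨G', hle, hmax, hmargin⟩ := exists_le_forall_le_sub_deleteEdges (condTri n (l / n)) d G
  simp only [nsmul_eq_mul'] at hmax
  refine ⟨G', hle, ?_, (Nat.cast_le.mpr (edgeCount_mono hle)).trans hE, hmargin⟩
  calc (a - 2 * w) * k = (a - w) * k - w * k := by ring
    _ ≤ condTri n (l / n) G - d * edgeCount G :=
      sub_le_sub hT ((mul_le_mul_of_nonneg_left hE hd).trans_eq hdB)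
    _ ≤ condTri n (l / n) G' - d * edgeCount G' := hmax
    _ ≤ condTri n (l / n) G' := sub_le_self _ (by positivity)
end
end
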